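/- For every integer k ≥ 2 there exists a configuration 0 = β₀ < β₁ < … < β_{k−1} < β_k = 1 such that M_∞^{(j)}(β₁,…,β_{k−1}) = 0 for every j = 1,…,k−1; equivalently, setting α_j = s̄(β_{j−1},β_j), the relations ξ'(β_j)/ζ'(β_j) = (ξ(α_{j+1}) − ξ(α_j))/(ζ(α_{j+1}) − ζ(α_j)) hold for j = 1,…,k−1, so that the function defined on [0,1] piecewise by r ↦ G_{[β_{j−1},β_j]}(r,α_j)/G_{[β_{j−1},β_j]}(α_j,α_j) for r ∈ [β_{j−1},β_j) is continuous. -/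

import Mathlib

/-!
The configuration is obtained as a maximizer of an energy on a compact simplex.

For `c ∈ [0,1]` let `D_c` be the solution of `ℒu = 0` with `D_c'(c) = 0`, `D_c(c) = 1` (a multiple
of `ξ` if `c = 0`), and let `K(c, r) = r^{N-1} D_c'(r) / D_c(r)`. The quantity
`K(a, s) - K(b, s)` is the energy `∫_a^b (u'² + u²) r^{N-1} dr` of `u = G_{[a,b]}(·,s)/G_{[a,b]}(s,s)`.
The total energy `∑_j K(β_{j-1}, α_j) - K(β_j, α_j)` is continuous on the compact set
`0 = β₀ ≤ α₁ ≤ β₁ ≤ ⋯ ≤ α_k ≤ β_k = 1` (`energy_cont`), so it has a maximizer.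

With the fluxes `P = r^{N-1} ξ'`, increasing, and `Q = -r^{N-1} ζ'`, decreasing, the Wronskian
identity gives (`Kf_sub`)
`K(a, r) - K(b, r) = (P_b Q_a - P_a Q_b) / (D_a(r) D_b(r))`, and the numerator is positive for
`a < b`. Hence an interior optimal peak `α_j` minimizes `D_{β_{j-1}} D_{β_j}`, which is the
reflection law (`reflection_of_max`), so `α_j = s̄(β_{j-1}, β_j)` by uniqueness. Comparing an optimal
interface `β_j` with nearby ones yields `D_{β_j}(α_j) = D_{β_j}(α_{j+1})` (`interface_le`,
`interface_ge`), which is the vanishing of `M_∞^{(j)}`.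

It remains to see that the nodes of a maximizer are distinct (`max_strict`). Nodes stuck at `0` can
be moved to the right with a gain (`max_one_pos`). If `x_{i-1} < x_i = x_{i+1}` with `x_i > 0`, the
node `x_i` can be moved to the left with a gain, because `D_c` has a strict minimum at `c`.
-/

open Real Set Filter Topology

/-- Context: the two fundamental solutions `ξ`, `ζ` of `ℒu = -u'' - ((N-1)/r) u' + u = 0`
on `(0,1)` together with their basic properties (Proposition 2.1 of the paper). -/
structure GreenData (N : ℕ) where
  xi : ℝ → ℝ
  zeta : ℝ → ℝ
  xi_smooth : ContDiffOn ℝ 2 xi (Set.Icc 0 1)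
  zeta_smooth : ContDiffOn ℝ 2 zeta (Set.Ioc 0 1)
  xi_pos : ∀ r ∈ Set.Icc (0:ℝ) 1, 0 < xi r
  zeta_pos : ∀ r ∈ Set.Ioc (0:ℝ) 1, 0 < zeta r
  xi_ode : ∀ r ∈ Set.Ioo (0:ℝ) 1,
    -(deriv (deriv xi) r) - ((N : ℝ) - 1) / r * deriv xi r + xi r = 0
  zeta_ode : ∀ r ∈ Set.Ioo (0:ℝ) 1,
    -(deriv (deriv zeta) r) - ((N : ℝ) - 1) / r * deriv zeta r + zeta r = 0
  xi_deriv_zero : deriv xi 0 = 0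
  zeta_deriv_one : deriv zeta 1 = 0
  xi_mono : StrictMonoOn xi (Set.Icc 0 1)
  xi_bdd : ∃ M : ℝ, ∀ r ∈ Set.Icc (0:ℝ) 1, xi r ≤ M
  zeta_anti : StrictAntiOn zeta (Set.Ioc 0 1)
  wronskian : ∀ r ∈ Set.Ioc (0:ℝ) 1,
    r ^ (N - 1) * (deriv xi r * zeta r - xi r * deriv zeta r) = 1
  xi_lim : Filter.Tendsto xi (nhdsWithin 0 (Set.Ioi 0)) (nhds (1 / ((N : ℝ) - 2)))
  zeta_lim : Filter.Tendsto (fun r => r ^ (N - 2) * zeta r)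
    (nhdsWithin 0 (Set.Ioi 0)) (nhds 1)
  zeta_deriv_lim : Filter.Tendsto (fun r => r ^ (N - 1) * deriv zeta r)
    (nhdsWithin 0 (Set.Ioi 0)) (nhds (-((N : ℝ) - 2)))

namespace GreenData

variable {N : ℕ}

/-- The function `ξ_{[a,b]}` of the paper. -/
noncomputable def xiI (d : GreenData N) (a b : ℝ) : ℝ → ℝ :=
  if a = 0 then
    (if b = 1 then d.xi else fun r => d.xi r / deriv d.xi b)
  else if b = 1 then
    fun r => deriv d.xi a * d.zeta r - d.xi r * deriv d.zeta a
  else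
    fun r => (deriv d.xi a * d.zeta r - d.xi r * deriv d.zeta a) /
      Real.sqrt (deriv d.xi a * deriv d.zeta b - deriv d.xi b * deriv d.zeta a)

/-- The function `ζ_{[a,b]}` of the paper. -/
noncomputable def zetaI (d : GreenData N) (a b : ℝ) : ℝ → ℝ :=
  if a = 0 then
    (if b = 1 then d.zeta
     else fun r => deriv d.xi b * d.zeta r - d.xi r * deriv d.zeta b)
  else if b = 1 then
    fun r => -(d.zeta r / deriv d.zeta a)
  else
    fun r => (deriv d.xi b * d.zeta r - d.xi r * deriv d.zeta b) /
      Real.sqrt (deriv d.xi a * deriv d.zeta b - deriv d.xi b * deriv d.zeta a)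

/-- The reflection law `ξ'_{[a,b]}(s)/ξ_{[a,b]}(s) + ζ'_{[a,b]}(s)/ζ_{[a,b]}(s) = 0`. -/
def ReflectionAt (d : GreenData N) (a b s : ℝ) : Prop :=
  deriv (d.xiI a b) s / d.xiI a b s + deriv (d.zetaI a b) s / d.zetaI a b s = 0

/-- The Green function `G_{[a,b]}(r,s)`. -/
noncomputable def G (d : GreenData N) (a b r s : ℝ) : ℝ :=
  if r ≤ s then s ^ (N - 1) * d.xiI a b r * d.zetaI a b s
  else s ^ (N - 1) * d.xiI a b s * d.zetaI a b r

end GreenData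

/-- `sbar` is the function associating to `0 ≤ a < b ≤ 1` the unique point
`s̄(a,b) ∈ (a,b)` satisfying the reflection law. -/
def IsSBar {N : ℕ} (d : GreenData N) (sbar : ℝ → ℝ → ℝ) : Prop :=
  ∀ a b : ℝ, 0 ≤ a → a < b → b ≤ 1 →
    sbar a b ∈ Set.Ioo a b ∧ d.ReflectionAt a b (sbar a b) ∧
    ∀ s ∈ Set.Ioo a b, d.ReflectionAt a b s → s = sbar a b

/-- The map `M_∞^{(j)}` of the paper, with `α_j = s̄(β_{j-1},β_j)`. -/
noncomputable def Minf {N : ℕ} (d : GreenData N) (sbar : ℝ → ℝ → ℝ)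
    (β : ℕ → ℝ) (j : ℕ) : ℝ :=
  (1 / (β j) ^ (N - 1)) *
    (1 / (deriv d.xi (β j) * d.zeta (sbar (β j) (β (j + 1))) -
            d.xi (sbar (β j) (β (j + 1))) * deriv d.zeta (β j)) -
     1 / (deriv d.xi (β j) * d.zeta (sbar (β (j - 1)) (β j)) -
            d.xi (sbar (β (j - 1)) (β j)) * deriv d.zeta (β j)))

/-- Extension of a `(k-1)`-tuple `(β₁,…,β_{k-1})` by the conventions `β₀ = 0`, `β_k = 1`. -/
noncomputable def extendB (k : ℕ) (β : Fin (k - 1) → ℝ) : ℕ → ℝ := fun j =>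
  if hj : 1 ≤ j ∧ j ≤ k - 1 then β ⟨j - 1, by omega⟩
  else if j = 0 then 0 else 1

/-- The open simplex `T = {0 = β₀ < β₁ < ⋯ < β_{k-1} < β_k = 1}` as a subset of `ℝ^{k-1}`. -/
def TSet (k : ℕ) : Set (Fin (k - 1) → ℝ) :=
  {β | ∀ j < k, extendB k β j < extendB k β (j + 1)}


/-! ### The weighted derivatives of `ξ` and `ζ` -/

namespace GreenData

variable {N : ℕ}

/-- The flux `P(r) = r^{N-1} ξ'(r)`. -/
noncomputable def Pf (d : GreenData N) (r : ℝ) : ℝ := r ^ (N - 1) * deriv d.xi r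

/-- The flux `Q(r) = -r^{N-1} ζ'(r)`, extended to `r = 0` by its limit `N - 2`. -/
noncomputable def Qf (d : GreenData N) (r : ℝ) : ℝ :=
  if r = 0 then (N : ℝ) - 2 else -(r ^ (N - 1) * deriv d.zeta r)

/-- The function `1 / ζ`, extended to `r = 0` by its limit `0`. -/
noncomputable def Zf (d : GreenData N) (r : ℝ) : ℝ := if r = 0 then 0 else 1 / d.zeta r

/-- `D_c(r) = P(c) ζ(r) + Q(c) ξ(r)`: the solution of `ℒu = 0` with `u'(c) = 0` and `u(c) = 1`
when `c > 0`, and `(N - 2) ξ` when `c = 0`. -/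
noncomputable def Df (d : GreenData N) (c r : ℝ) : ℝ := d.Pf c * d.zeta r + d.xi r * d.Qf c

/-- The flux `r^{N-1} D_c'(r) / D_c(r)`, written through `1 / ζ` so that it makes sense, and
vanishes, at `r = 0`. -/
noncomputable def Kf (d : GreenData N) (c r : ℝ) : ℝ :=
  (d.Pf r * d.Qf c - d.Pf c * d.Qf r) * d.Zf r / (d.Pf c + d.xi r * d.Qf c * d.Zf r)

lemma xi_contDiffAt (d : GreenData N) {r : ℝ} (hr : r ∈ Ioo (0:ℝ) 1) :
    ContDiffAt ℝ 2 d.xi r := d.xi_smooth.contDiffAt (Icc_mem_nhds hr.1 hr.2)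

lemma zeta_contDiffAt (d : GreenData N) {r : ℝ} (hr : r ∈ Ioo (0:ℝ) 1) :
    ContDiffAt ℝ 2 d.zeta r := d.zeta_smooth.contDiffAt (Ioc_mem_nhds hr.1 hr.2)

lemma xi_differentiableAt (d : GreenData N) {r : ℝ} (hr : r ∈ Ioc (0:ℝ) 1) :
    DifferentiableAt ℝ d.xi r := by
  rcases hr.2.lt_or_eq with h | rfl
  · exact (d.xi_contDiffAt ⟨hr.1, h⟩).differentiableAt (by norm_num)
  · -- the Wronskian identity at `1` forces `ξ'(1) ≠ 0`
    apply differentiableAt_of_deriv_ne_zero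
    intro h0
    have := d.wronskian 1 hr
    simp [h0, d.zeta_deriv_one] at this

lemma xi_derivWithin (d : GreenData N) {r : ℝ} (hr : r ∈ Ioc (0:ℝ) 1) :
    derivWithin d.xi (Icc 0 1) r = deriv d.xi r :=
  (d.xi_differentiableAt hr).derivWithin (uniqueDiffOn_Icc_zero_one r ⟨hr.1.le, hr.2⟩)

lemma xi_derivWithin_cont (d : GreenData N) :
    ContinuousOn (derivWithin d.xi (Icc 0 1)) (Icc 0 1) :=
  d.xi_smooth.continuousOn_derivWithin uniqueDiffOn_Icc_zero_one (by norm_num)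

lemma zeta_derivWithin_cont (d : GreenData N) :
    ContinuousOn (derivWithin d.zeta (Ioc 0 1)) (Ioc 0 1) :=
  d.zeta_smooth.continuousOn_derivWithin (uniqueDiffOn_Ioc 0 1) (by norm_num)

lemma zeta_derivWithin_of_lt (d : GreenData N) {r : ℝ} (hr : r ∈ Ioo (0:ℝ) 1) :
    derivWithin d.zeta (Ioc 0 1) r = deriv d.zeta r :=
  ((d.zeta_contDiffAt hr).differentiableAt (by norm_num)).derivWithin
    (uniqueDiffOn_Ioc 0 1 r ⟨hr.1, hr.2.le⟩)

/-- The hypothesis `deriv ζ 1 = 0` alone could be a junk value; letting `r → 1` in the Wronskian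
identity shows that the one-sided derivative of `ζ` at `1` does vanish. -/
lemma zeta_derivWithin (d : GreenData N) {r : ℝ} (hr : r ∈ Ioc (0:ℝ) 1) :
    derivWithin d.zeta (Ioc 0 1) r = deriv d.zeta r := by
  rcases hr.2.lt_or_eq with h | rfl
  · exact d.zeta_derivWithin_of_lt ⟨hr.1, h⟩
  have hmem : (1:ℝ) ∈ Ioc (0:ℝ) 1 := hr
  have hcont : ContinuousOn (fun r : ℝ => r ^ (N - 1) *
      (derivWithin d.xi (Icc 0 1) r * d.zeta r - d.xi r * derivWithin d.zeta (Ioc 0 1) r))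
      (Ioc 0 1) :=
    (continuous_pow _).continuousOn.mul
      (((d.xi_derivWithin_cont.mono Ioc_subset_Icc_self).mul d.zeta_smooth.continuousOn).sub
        ((d.xi_smooth.continuousOn.mono Ioc_subset_Icc_self).mul d.zeta_derivWithin_cont))
  have hlim := ((hcont 1 hmem).mono Ioo_subset_Ioc_self).tendsto
  have hev : (fun r : ℝ => r ^ (N - 1) *
      (derivWithin d.xi (Icc 0 1) r * d.zeta r - d.xi r * derivWithin d.zeta (Ioc 0 1) r))
      =ᶠ[𝓝[Ioo 0 1] 1] fun _ => (1:ℝ) := by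
    filter_upwards [self_mem_nhdsWithin] with r hr
    rw [d.xi_derivWithin (Ioo_subset_Ioc_self hr), d.zeta_derivWithin_of_lt hr]
    exact d.wronskian r (Ioo_subset_Ioc_self hr)
  have hne : (𝓝[Ioo (0:ℝ) 1] 1).NeBot := by
    rw [nhdsWithin_Ioo_eq_nhdsLT zero_lt_one]; infer_instance
  have h1 := tendsto_nhds_unique hlim (tendsto_const_nhds.congr' hev.symm)
  have h2 := d.wronskian 1 hmem
  rw [d.xi_derivWithin hmem] at h1
  rw [d.zeta_deriv_one] at h2 ⊢
  simp only [one_pow, one_mul, mul_zero, sub_zero] at h1 h2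
  have h3 : d.xi 1 * derivWithin d.zeta (Ioc 0 1) 1 = 0 := by linarith
  exact (mul_eq_zero.1 h3).resolve_left (d.xi_pos 1 ⟨zero_le_one, le_rfl⟩).ne'

lemma xi_hasDeriv (d : GreenData N) {r : ℝ} (hr : r ∈ Ioc (0:ℝ) 1) :
    HasDerivWithinAt d.xi (deriv d.xi r) (Ioc 0 1) r :=
  (d.xi_differentiableAt hr).hasDerivAt.hasDerivWithinAt

lemma zeta_hasDeriv (d : GreenData N) {r : ℝ} (hr : r ∈ Ioc (0:ℝ) 1) :
    HasDerivWithinAt d.zeta (deriv d.zeta r) (Ioc 0 1) r := by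
  rw [← d.zeta_derivWithin hr]
  exact ((d.zeta_smooth.differentiableOn (by norm_num)) r hr).hasDerivWithinAt

lemma Pf_zero (hN : 3 ≤ N) (d : GreenData N) : d.Pf 0 = 0 := by
  simp [Pf, show N - 1 ≠ 0 by omega]

lemma Qf_zero (d : GreenData N) : d.Qf 0 = (N : ℝ) - 2 := by simp [Qf]

lemma Qf_of_ne (d : GreenData N) {r : ℝ} (hr : r ≠ 0) :
    d.Qf r = -(r ^ (N - 1) * deriv d.zeta r) := by simp [Qf, hr]

lemma Qf_one (d : GreenData N) : d.Qf 1 = 0 := by simp [Qf, d.zeta_deriv_one]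

lemma wronsk (d : GreenData N) {r : ℝ} (hr : r ∈ Ioc (0:ℝ) 1) :
    d.Pf r * d.zeta r + d.xi r * d.Qf r = 1 := by
  rw [Qf_of_ne d hr.1.ne', ← d.wronskian r hr, Pf]; ring

lemma Pf_cont (hN : 3 ≤ N) (d : GreenData N) : ContinuousOn d.Pf (Icc 0 1) := by
  have h : ContinuousOn (fun r : ℝ => r ^ (N - 1) * derivWithin d.xi (Icc 0 1) r) (Icc 0 1) :=
    (continuous_pow _).continuousOn.mul d.xi_derivWithin_cont
  refine h.congr fun r hr => ?_
  rcases hr.1.eq_or_lt with h0 | h0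
  · subst h0; simp [Pf, show N - 1 ≠ 0 by omega]
  · simp only [Pf, d.xi_derivWithin ⟨h0, hr.2⟩]

/-- A function on `[0,1]` is continuous as soon as it is on `(0,1]` and tends to its value
at `0`. -/
lemma contOn_of_lim {f : ℝ → ℝ} (h1 : ContinuousOn f (Ioc 0 1))
    (h0 : Tendsto f (𝓝[>] 0) (𝓝 (f 0))) : ContinuousOn f (Icc 0 1) := by
  intro r hr
  rcases hr.1.eq_or_lt with h | h
  · subst h
    have h2 : ContinuousWithinAt f (Ioi 0) 0 := h0
    exact (continuousWithinAt_Ioi_iff_Ici.1 h2).mono Icc_subset_Ici_self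
  · have h2 : ContinuousWithinAt f (Ioc 0 1) r := h1 r ⟨h, hr.2⟩
    refine h2.mono_of_mem_nhdsWithin ?_
    filter_upwards [self_mem_nhdsWithin, mem_nhdsWithin_of_mem_nhds (Ioi_mem_nhds h)] with x hx hx'
    exact ⟨hx', hx.2⟩

lemma Qf_cont (d : GreenData N) : ContinuousOn d.Qf (Icc 0 1) := by
  apply contOn_of_lim
  · have h : ContinuousOn (fun r : ℝ => -(r ^ (N - 1) * derivWithin d.zeta (Ioc 0 1) r))
        (Ioc 0 1) := ((continuous_pow _).continuousOn.mul d.zeta_derivWithin_cont).neg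
    refine h.congr fun r hr => ?_
    simp only [Qf_of_ne d hr.1.ne', d.zeta_derivWithin hr]
  · rw [Qf_zero]
    have h := d.zeta_deriv_lim.neg
    rw [neg_neg] at h
    refine h.congr' ?_
    filter_upwards [self_mem_nhdsWithin] with r hr
    rw [Qf_of_ne d (ne_of_gt hr)]

lemma Zf_cont (hN : 3 ≤ N) (d : GreenData N) : ContinuousOn d.Zf (Icc 0 1) := by
  apply contOn_of_lim
  · have h : ContinuousOn (fun r : ℝ => 1 / d.zeta r) (Ioc 0 1) :=
      continuousOn_const.div d.zeta_smooth.continuousOn fun r hr => (d.zeta_pos r hr).ne'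
    refine h.congr fun r hr => ?_
    simp [Zf, hr.1.ne']
  · have h : Tendsto (fun r : ℝ => r ^ (N - 2) / (r ^ (N - 2) * d.zeta r)) (𝓝[>] 0)
        (𝓝 (0 / 1)) := by
      refine Tendsto.div ?_ d.zeta_lim one_ne_zero
      have h2 := (continuous_pow (M := ℝ) (N - 2)).tendsto 0
      rw [zero_pow (by omega)] at h2
      exact h2.mono_left nhdsWithin_le_nhds
    have hz : d.Zf 0 = 0 / 1 := by simp [Zf]
    rw [hz]
    refine h.congr' ?_
    filter_upwards [self_mem_nhdsWithin] with r hr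
    have hr0 : r ≠ 0 := ne_of_gt hr
    rw [Zf, if_neg hr0, div_mul_eq_div_div, div_self (pow_ne_zero _ hr0)]

lemma pow_pred (hN : 3 ≤ N) {r : ℝ} (hr : r ≠ 0) :
    ((N - 1 : ℕ) : ℝ) * r ^ (N - 1 - 1) = r ^ (N - 1) * (((N : ℝ) - 1) / r) := by
  obtain ⟨n, rfl⟩ : ∃ n, N = n + 2 := ⟨N - 2, by omega⟩
  simp only [Nat.add_sub_cancel, show n + 2 - 1 = n + 1 by omega]
  push_cast
  field_simp
  ring

/-- `P' = r^{N-1} ξ > 0`, which is the equation `ℒξ = 0` in divergence form. -/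
lemma Pf_strictMono (hN : 3 ≤ N) (d : GreenData N) : StrictMonoOn d.Pf (Icc 0 1) := by
  apply strictMonoOn_of_deriv_pos (convex_Icc 0 1) (d.Pf_cont hN)
  intro r hr
  rw [interior_Icc] at hr
  have h2 : DifferentiableAt ℝ (deriv d.xi) r :=
    ((d.xi_smooth.mono Ioo_subset_Icc_self).deriv_of_isOpen (m := 1) isOpen_Ioo
      (by norm_num)).differentiableOn (by norm_num) r hr |>.differentiableAt
      (isOpen_Ioo.mem_nhds hr)
  have h := ((hasDerivAt_pow (N - 1) r).mul h2.hasDerivAt).deriv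
  have e : d.Pf = (fun x : ℝ => x ^ (N - 1)) * deriv d.xi := rfl
  have ho := d.xi_ode r hr
  rw [e, h, pow_pred hN hr.1.ne']
  have : r ^ (N - 1) * (((N : ℝ) - 1) / r) * deriv d.xi r + r ^ (N - 1) * deriv (deriv d.xi) r
      = r ^ (N - 1) * d.xi r := by linear_combination -(r ^ (N - 1)) * ho
  rw [this]
  exact mul_pos (pow_pos hr.1 _) (d.xi_pos r (Ioo_subset_Icc_self hr))

/-- `Q' = -r^{N-1} ζ < 0`, which is the equation `ℒζ = 0` in divergence form. -/
lemma Qf_strictAnti (hN : 3 ≤ N) (d : GreenData N) : StrictAntiOn d.Qf (Icc 0 1) := by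
  apply strictAntiOn_of_deriv_neg (convex_Icc 0 1) d.Qf_cont
  intro r hr
  rw [interior_Icc] at hr
  have h2 : DifferentiableAt ℝ (deriv d.zeta) r :=
    ((d.zeta_smooth.mono Ioo_subset_Ioc_self).deriv_of_isOpen (m := 1) isOpen_Ioo
      (by norm_num)).differentiableOn (by norm_num) r hr |>.differentiableAt
      (isOpen_Ioo.mem_nhds hr)
  have h := ((hasDerivAt_pow (N - 1) r).mul h2.hasDerivAt).neg.deriv
  have e : d.Qf =ᶠ[𝓝 r] -((fun x : ℝ => x ^ (N - 1)) * deriv d.zeta) := by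
    filter_upwards [Ioi_mem_nhds hr.1] with x hx
    rw [Qf_of_ne d (ne_of_gt hx)]; rfl
  have ho := d.zeta_ode r hr
  rw [e.deriv_eq, h, pow_pred hN hr.1.ne']
  have : -(r ^ (N - 1) * (((N : ℝ) - 1) / r) * deriv d.zeta r
      + r ^ (N - 1) * deriv (deriv d.zeta) r)
      = -(r ^ (N - 1) * d.zeta r) := by linear_combination (r ^ (N - 1)) * ho
  rw [this]
  exact neg_lt_zero.2 (mul_pos (pow_pos hr.1 _) (d.zeta_pos r (Ioo_subset_Ioc_self hr)))

lemma Pf_pos (hN : 3 ≤ N) (d : GreenData N) {r : ℝ} (hr : r ∈ Ioc (0:ℝ) 1) : 0 < d.Pf r := by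
  rw [← d.Pf_zero hN]
  exact d.Pf_strictMono hN ⟨le_rfl, zero_le_one⟩ (Ioc_subset_Icc_self hr) hr.1

lemma Pf_nonneg (hN : 3 ≤ N) (d : GreenData N) {r : ℝ} (hr : r ∈ Icc (0:ℝ) 1) :
    0 ≤ d.Pf r := by
  rw [← d.Pf_zero hN]
  exact (d.Pf_strictMono hN).monotoneOn ⟨le_rfl, zero_le_one⟩ hr hr.1

lemma Qf_pos (hN : 3 ≤ N) (d : GreenData N) {r : ℝ} (hr : r ∈ Ico (0:ℝ) 1) : 0 < d.Qf r := by
  rw [← d.Qf_one]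
  exact d.Qf_strictAnti hN (Ico_subset_Icc_self hr) ⟨zero_le_one, le_rfl⟩ hr.2

lemma Qf_nonneg (hN : 3 ≤ N) (d : GreenData N) {r : ℝ} (hr : r ∈ Icc (0:ℝ) 1) :
    0 ≤ d.Qf r := by
  rw [← d.Qf_one]
  exact (d.Qf_strictAnti hN).antitoneOn hr ⟨zero_le_one, le_rfl⟩ hr.2

lemma Zf_nonneg (d : GreenData N) {r : ℝ} (hr : r ∈ Icc (0:ℝ) 1) : 0 ≤ d.Zf r := by
  rcases hr.1.eq_or_lt with h | h
  · simp [Zf, ← h]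
  · rw [Zf, if_neg h.ne']; exact (one_div_pos.2 (d.zeta_pos r ⟨h, hr.2⟩)).le

/-- `P_b Q_a - P_a Q_b > 0` for `a < b`: the sign of `D_a'` and of every increment below. -/
lemma cross_pos (hN : 3 ≤ N) (d : GreenData N) {a b : ℝ} (ha : 0 ≤ a) (hab : a < b)
    (hb : b ≤ 1) : 0 < d.Pf b * d.Qf a - d.Pf a * d.Qf b := by
  have h1 := d.Pf_strictMono hN ⟨ha, hab.le.trans hb⟩ ⟨ha.trans hab.le, hb⟩ hab
  have h2 := d.Qf_strictAnti hN ⟨ha, hab.le.trans hb⟩ ⟨ha.trans hab.le, hb⟩ hab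
  have h3 := d.Pf_nonneg hN (r := a) ⟨ha, hab.le.trans hb⟩
  have h4 := d.Qf_nonneg hN (r := b) ⟨ha.trans hab.le, hb⟩
  nlinarith

/-! ### The solutions `D_c` -/

lemma Df_pos (hN : 3 ≤ N) (d : GreenData N) {c r : ℝ} (hc : c ∈ Icc (0:ℝ) 1)
    (hr : r ∈ Ioc (0:ℝ) 1) : 0 < d.Df c r := by
  have hz := d.zeta_pos r hr
  have hx := d.xi_pos r (Ioc_subset_Icc_self hr)
  rcases hc.1.eq_or_lt with h | h
  · have hq := d.Qf_pos hN (r := c) ⟨hc.1, h ▸ zero_lt_one⟩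
    have hp := d.Pf_nonneg hN hc
    unfold Df; positivity
  · have hq := d.Qf_nonneg hN hc
    have hp := d.Pf_pos hN (r := c) ⟨h, hc.2⟩
    unfold Df; positivity

lemma Df_self (d : GreenData N) {c : ℝ} (hc : c ∈ Ioc (0:ℝ) 1) : d.Df c c = 1 := d.wronsk hc

lemma Df_zero (hN : 3 ≤ N) (d : GreenData N) (r : ℝ) :
    d.Df 0 r = d.xi r * ((N : ℝ) - 2) := by
  rw [Df, d.Pf_zero hN, Qf_zero]; ring

lemma Df_hasDeriv (d : GreenData N) (c : ℝ) {r : ℝ} (hr : r ∈ Ioc (0:ℝ) 1) :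
    HasDerivWithinAt (d.Df c) ((d.Pf r * d.Qf c - d.Pf c * d.Qf r) / r ^ (N - 1))
      (Ioc 0 1) r := by
  have h := ((d.zeta_hasDeriv hr).const_mul (d.Pf c)).add
    ((d.xi_hasDeriv hr).mul_const (d.Qf c))
  have hr0 : r ^ (N - 1) ≠ 0 := pow_ne_zero _ hr.1.ne'
  have e : (d.Pf r * d.Qf c - d.Pf c * d.Qf r) / r ^ (N - 1)
      = d.Pf c * deriv d.zeta r + deriv d.xi r * d.Qf c := by
    rw [Qf_of_ne d hr.1.ne', div_eq_iff hr0]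
    simp only [Pf]; ring
  rw [e]
  exact h

lemma Df_cont (d : GreenData N) (c : ℝ) : ContinuousOn (d.Df c) (Ioc 0 1) :=
  fun _ hr => (d.Df_hasDeriv c hr).continuousWithinAt

lemma Df_cont_left (hN : 3 ≤ N) (d : GreenData N) : ContinuousOn (d.Df 0) (Icc 0 1) :=
  (d.xi_smooth.continuousOn.mul continuousOn_const).congr fun r _ => d.Df_zero hN r

lemma Df_cont_c (hN : 3 ≤ N) (d : GreenData N) (r : ℝ) :
    ContinuousOn (fun c => d.Df c r) (Icc 0 1) :=
  ((d.Pf_cont hN).mul continuousOn_const).add (continuousOn_const.mul d.Qf_cont)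

lemma Df_hasDerivAt (d : GreenData N) (c : ℝ) {r : ℝ} (hr : r ∈ Ioo (0:ℝ) 1) :
    HasDerivAt (d.Df c) ((d.Pf r * d.Qf c - d.Pf c * d.Qf r) / r ^ (N - 1)) r :=
  (d.Df_hasDeriv c (Ioo_subset_Ioc_self hr)).hasDerivAt (Ioc_mem_nhds hr.1 hr.2)

lemma Df_gt_right (hN : 3 ≤ N) (d : GreenData N) {c r : ℝ} (hc : 0 < c) (hcr : c < r)
    (hr : r ≤ 1) : 1 < d.Df c r := by
  rw [← d.Df_self ⟨hc, hcr.le.trans hr⟩]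
  have hs : Icc c r ⊆ Ioc 0 1 := fun x hx => ⟨hc.trans_le hx.1, hx.2.trans hr⟩
  refine strictMonoOn_of_deriv_pos (convex_Icc c r) ((d.Df_cont c).mono hs) ?_
    ⟨le_rfl, hcr.le⟩ ⟨hcr.le, le_rfl⟩ hcr
  intro x hx
  rw [interior_Icc] at hx
  rw [(d.Df_hasDerivAt c ⟨hc.trans hx.1, hx.2.trans_le hr⟩).deriv]
  exact div_pos (d.cross_pos hN hc.le hx.1 (hx.2.le.trans hr)) (pow_pos (hc.trans hx.1) _)

lemma Df_gt_left (hN : 3 ≤ N) (d : GreenData N) {c r : ℝ} (hr : 0 < r) (hrc : r < c)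
    (hc : c ≤ 1) : 1 < d.Df c r := by
  rw [← d.Df_self ⟨hr.trans hrc, hc⟩]
  have hs : Icc r c ⊆ Ioc 0 1 := fun x hx => ⟨hr.trans_le hx.1, hx.2.trans hc⟩
  refine strictAntiOn_of_deriv_neg (convex_Icc r c) ((d.Df_cont c).mono hs) ?_
    ⟨le_rfl, hrc.le⟩ ⟨hrc.le, le_rfl⟩ hrc
  intro x hx
  rw [interior_Icc] at hx
  rw [(d.Df_hasDerivAt c ⟨hr.trans hx.1, hx.2.trans_le hc⟩).deriv]
  have := d.cross_pos hN (hr.trans hx.1).le hx.2 hc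
  exact div_neg_of_neg_of_pos (by linarith) (pow_pos (hr.trans hx.1) _)

/-! ### The fluxes `K(c, r)` -/

lemma Kf_right_zero (d : GreenData N) (c : ℝ) : d.Kf c 0 = 0 := by simp [Kf, Zf]

lemma Kf_eq (d : GreenData N) {c r : ℝ} (hr : r ∈ Ioc (0:ℝ) 1) :
    d.Kf c r = (d.Pf r * d.Qf c - d.Pf c * d.Qf r) / d.Df c r := by
  have hz := (d.zeta_pos r hr).ne'
  have e : d.Pf c + d.xi r * d.Qf c * d.Zf r = d.Df c r / d.zeta r := by
    rw [Zf, if_neg hr.1.ne', Df]; field_simp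
  rw [Kf, e, Zf, if_neg hr.1.ne', mul_one_div, div_div_div_cancel_right₀ hz]

/-- The increment of `K` in its first variable factorizes, by the Wronskian identity. -/
lemma Kf_sub (hN : 3 ≤ N) (d : GreenData N) {a b r : ℝ} (ha : a ∈ Icc (0:ℝ) 1)
    (hb : b ∈ Icc (0:ℝ) 1) (hr : r ∈ Ioc (0:ℝ) 1) :
    d.Kf a r - d.Kf b r =
      (d.Pf b * d.Qf a - d.Pf a * d.Qf b) / (d.Df a r * d.Df b r) := by
  rw [d.Kf_eq hr, d.Kf_eq hr, div_sub_div _ _ (d.Df_pos hN ha hr).ne' (d.Df_pos hN hb hr).ne']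
  congr 1
  simp only [Df]
  linear_combination (d.Pf b * d.Qf a - d.Pf a * d.Qf b) * d.wronsk hr

/-- A bound on `K(c, r)` uniform in `c` that vanishes at `r = 0`; it gives continuity of `K` at
the corner `(0, 0)`. -/
lemma Kf_bound (hN : 3 ≤ N) (d : GreenData N) {c r : ℝ} (hc : c ∈ Icc (0:ℝ) 1)
    (hr : r ∈ Icc (0:ℝ) 1) : |d.Kf c r| ≤ d.Pf r / d.xi r + d.Qf r * d.Zf r := by
  have h1 := d.Pf_nonneg hN hc
  have h2 := d.Pf_nonneg hN hr
  have h3 := d.Qf_nonneg hN hc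
  have h4 := d.Qf_nonneg hN hr
  have h5 := d.Zf_nonneg hr
  have h6 := d.xi_pos r hr
  have hD : 0 ≤ d.Pf c + d.xi r * d.Qf c * d.Zf r := by positivity
  rw [Kf, abs_div, abs_of_nonneg hD]
  apply div_le_of_le_mul₀ hD (by positivity)
  have h7 : |(d.Pf r * d.Qf c - d.Pf c * d.Qf r) * d.Zf r|
      ≤ (d.Pf r * d.Qf c + d.Pf c * d.Qf r) * d.Zf r := by
    rw [abs_mul, abs_of_nonneg h5]
    refine mul_le_mul_of_nonneg_right (abs_le.2 ⟨?_, ?_⟩) h5 <;>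
      nlinarith [mul_nonneg h2 h3, mul_nonneg h1 h4]
  refine h7.trans ?_
  have e : (d.Pf r / d.xi r + d.Qf r * d.Zf r) * (d.Pf c + d.xi r * d.Qf c * d.Zf r)
      = (d.Pf r * d.Qf c + d.Pf c * d.Qf r) * d.Zf r
        + (d.Pf r / d.xi r * d.Pf c + d.Qf r * d.Zf r * (d.xi r * d.Qf c * d.Zf r)) := by
    field_simp; ring
  rw [e]
  have : 0 ≤ d.Pf r / d.xi r * d.Pf c + d.Qf r * d.Zf r * (d.xi r * d.Qf c * d.Zf r) := by
    positivity
  linarith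

lemma Kf_cont (hN : 3 ≤ N) (d : GreenData N) :
    ContinuousOn (fun p : ℝ × ℝ => d.Kf p.1 p.2) (Icc 0 1 ×ˢ Icc 0 1) := by
  have m1 : MapsTo (Prod.fst : ℝ × ℝ → ℝ) (Icc (0:ℝ) 1 ×ˢ Icc (0:ℝ) 1) (Icc 0 1) :=
    fun p hp => hp.1
  have m2 : MapsTo (Prod.snd : ℝ × ℝ → ℝ) (Icc (0:ℝ) 1 ×ˢ Icc (0:ℝ) 1) (Icc 0 1) :=
    fun p hp => hp.2
  have P1 := (d.Pf_cont hN).comp continuousOn_fst m1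
  have P2 := (d.Pf_cont hN).comp continuousOn_snd m2
  have Q1 := d.Qf_cont.comp continuousOn_fst m1
  have Q2 := d.Qf_cont.comp continuousOn_snd m2
  have Z2 := (d.Zf_cont hN).comp continuousOn_snd m2
  have X2 := d.xi_smooth.continuousOn.comp continuousOn_snd m2
  rintro ⟨c, r⟩ ⟨hc, hr⟩
  by_cases h0 : c = 0 ∧ r = 0
  · obtain ⟨rfl, rfl⟩ := h0
    have hB := ((P2.div X2 fun p hp => (d.xi_pos p.2 hp.2).ne').add (Q2.mul Z2)) (0, 0) ⟨hc, hr⟩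
    have hB' := hB.tendsto
    simp only [Pi.add_apply, Pi.div_apply, Pi.mul_apply, Function.comp, d.Pf_zero hN, Zf, if_true,
      zero_div, mul_zero, add_zero] at hB'
    have : Tendsto (fun p : ℝ × ℝ => d.Kf p.1 p.2) (𝓝[Icc 0 1 ×ˢ Icc 0 1] (0, 0)) (𝓝 0) := by
      refine squeeze_zero_norm' ?_ hB'
      filter_upwards [self_mem_nhdsWithin] with p hp
      exact d.Kf_bound hN hp.1 hp.2
    simpa [ContinuousWithinAt, Kf_right_zero] using this
  · refine ContinuousWithinAt.div ((((P2.mul Q1).sub (P1.mul Q2)).mul Z2) (c, r) ⟨hc, hr⟩)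
      ((P1.add ((X2.mul Q1).mul Z2)) (c, r) ⟨hc, hr⟩) (ne_of_gt ?_)
    have h1 := d.Pf_nonneg hN hc
    have h3 := d.Qf_nonneg hN hc
    have h5 := d.Zf_nonneg hr
    have h6 := d.xi_pos r hr
    show 0 < d.Pf c + d.xi r * d.Qf c * d.Zf r
    have hc0 : (0:ℝ) ≤ c := hc.1
    rcases hc0.eq_or_lt with h | h
    · have hr0 : 0 < r := lt_of_le_of_ne hr.1 fun h' => h0 ⟨h.symm, h'.symm⟩
      have hq := d.Qf_pos hN (r := c) ⟨hc.1, h ▸ zero_lt_one⟩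
      have hz : 0 < d.Zf r := by
        rw [Zf, if_neg hr0.ne']; exact one_div_pos.2 (d.zeta_pos r ⟨hr0, hr.2⟩)
      positivity
    · have hp := d.Pf_pos hN (r := c) ⟨h, hc.2⟩
      positivity

/-! ### Optimality conditions in a single node -/

/-- Maximizing the energy of `[a,b]` over its peak means minimizing `D_a D_b`. -/
lemma peak_min (hN : 3 ≤ N) (d : GreenData N) {a b s : ℝ} (ha : 0 ≤ a) (hab : a < b)
    (hb : b ≤ 1) (hs : s ∈ Ioc (0:ℝ) 1)
    (hmax : ∀ y ∈ Icc a b, d.Kf a y - d.Kf b y ≤ d.Kf a s - d.Kf b s) {y : ℝ} (hy : y ∈ Icc a b)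
    (hy0 : 0 < y) : d.Df a s * d.Df b s ≤ d.Df a y * d.Df b y := by
  have hA : a ∈ Icc (0:ℝ) 1 := ⟨ha, hab.le.trans hb⟩
  have hB : b ∈ Icc (0:ℝ) 1 := ⟨ha.trans hab.le, hb⟩
  have hY : y ∈ Ioc (0:ℝ) 1 := ⟨hy0, hy.2.trans hb⟩
  have h := hmax y hy
  rw [d.Kf_sub hN hA hB hY, d.Kf_sub hN hA hB hs] at h
  have hW := d.cross_pos hN ha hab hb
  exact (div_le_div_iff_of_pos_left hW
    (mul_pos (d.Df_pos hN hA hY) (d.Df_pos hN hB hY))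
    (mul_pos (d.Df_pos hN hA hs) (d.Df_pos hN hB hs))).1 h

/-- The peak is not at the right end: there `D_a D_b` has derivative `D_a'(b) > 0`. -/
lemma peak_ne_right (hN : 3 ≤ N) (d : GreenData N) {a b : ℝ} (ha : 0 ≤ a) (hab : a < b)
    (hb : b ≤ 1)
    (hmax : ∀ y ∈ Icc a b, d.Kf a y - d.Kf b y ≤ d.Kf a b - d.Kf b b) : False := by
  have hB : b ∈ Ioc (0:ℝ) 1 := ⟨ha.trans_lt hab, hb⟩
  have h := (((d.Df_hasDeriv a hB).mul (d.Df_hasDeriv b hB)).mono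
    (show Ioo a b ⊆ Ioc 0 1 from fun x hx => ⟨ha.trans_lt hx.1, hx.2.le.trans hb⟩))
  rw [sub_self, zero_div, mul_zero, add_zero, d.Df_self hB, mul_one,
    hasDerivWithinAt_iff_tendsto_slope' (by simp), nhdsWithin_Ioo_eq_nhdsLT hab] at h
  have hL : 0 < (d.Pf b * d.Qf a - d.Pf a * d.Qf b) / b ^ (N - 1) :=
    div_pos (d.cross_pos hN ha hab hb) (pow_pos hB.1 _)
  refine absurd (le_of_tendsto h ?_) (not_le.2 hL)
  filter_upwards [Ioo_mem_nhdsLT hab] with y hy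
  have h1 := d.peak_min hN ha hab hb hB hmax (Ioo_subset_Icc_self hy) (ha.trans_lt hy.1)
  rw [slope_def_field]
  exact div_nonpos_of_nonneg_of_nonpos (sub_nonneg.2 h1) (sub_nonpos.2 hy.2.le)

lemma peak_deriv (hN : 3 ≤ N) (d : GreenData N) {a b s : ℝ} (ha : 0 ≤ a)
    (hb : b ≤ 1) (hs : s ∈ Ioo a b)
    (hmax : ∀ y ∈ Icc a b, d.Kf a y - d.Kf b y ≤ d.Kf a s - d.Kf b s) :
    deriv (d.Df a) s * d.Df b s + d.Df a s * deriv (d.Df b) s = 0 := by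
  have hS : s ∈ Ioo (0:ℝ) 1 := ⟨ha.trans_lt hs.1, hs.2.trans_le hb⟩
  have h := (d.Df_hasDerivAt a hS).mul (d.Df_hasDerivAt b hS)
  have hmin : IsLocalMin (d.Df a * d.Df b) s := by
    filter_upwards [isOpen_Ioo.mem_nhds hs] with y hy
    exact d.peak_min hN ha (hs.1.trans hs.2) hb (Ioo_subset_Ioc_self hS) hmax
      (Ioo_subset_Icc_self hy) (ha.trans_lt hy.1)
  rw [(d.Df_hasDerivAt a hS).deriv, (d.Df_hasDerivAt b hS).deriv]
  exact hmin.hasDerivAt_eq_zero h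

/-- Moving an interface `c` between the peaks `s < t` does not increase the energy; hence the
products of the values at nearby interfaces compare. -/
lemma interface_prod (hN : 3 ≤ N) (d : GreenData N) {s t y c : ℝ} (hs : s ∈ Ioc (0:ℝ) 1)
    (ht : t ∈ Ioc (0:ℝ) 1) (hy : 0 ≤ y) (hyc : y < c) (hc : c ≤ 1)
    (h : d.Kf y t - d.Kf y s ≤ d.Kf c t - d.Kf c s) :
    d.Df y s * d.Df c s ≤ d.Df y t * d.Df c t := by
  have hY : y ∈ Icc (0:ℝ) 1 := ⟨hy, hyc.le.trans hc⟩
  have hC : c ∈ Icc (0:ℝ) 1 := ⟨hy.trans hyc.le, hc⟩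
  have h1 := d.Kf_sub hN hY hC hs
  have h2 := d.Kf_sub hN hY hC ht
  have h3 : (d.Pf c * d.Qf y - d.Pf y * d.Qf c) / (d.Df y t * d.Df c t)
      ≤ (d.Pf c * d.Qf y - d.Pf y * d.Qf c) / (d.Df y s * d.Df c s) := by linarith
  exact (div_le_div_iff_of_pos_left (d.cross_pos hN hy hyc hc)
    (mul_pos (d.Df_pos hN hY ht) (d.Df_pos hN hC ht))
    (mul_pos (d.Df_pos hN hY hs) (d.Df_pos hN hC hs))).1 h3

lemma interface_le (hN : 3 ≤ N) (d : GreenData N) {s t c : ℝ} (hs : s ∈ Ioc (0:ℝ) 1)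
    (ht : t ∈ Ioc (0:ℝ) 1) (hsc : s < c) (hct : c ≤ t)
    (hmax : ∀ y ∈ Icc s t, d.Kf y t - d.Kf y s ≤ d.Kf c t - d.Kf c s) :
    d.Df c s ≤ d.Df c t := by
  have hC : c ∈ Icc (0:ℝ) 1 := ⟨(hs.1.trans hsc).le, hct.trans ht.2⟩
  have hlim : ∀ r, Tendsto (fun y => d.Df y r) (𝓝[<] c) (𝓝 (d.Df c r)) := fun r => by
    have h := ((d.Df_cont_c hN r c hC).mono (show Ioo s c ⊆ Icc 0 1 from fun x hx =>
      ⟨(hs.1.trans hx.1).le, hx.2.le.trans hC.2⟩)).tendsto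
    rwa [nhdsWithin_Ioo_eq_nhdsLT hsc] at h
  have h : d.Df c s * d.Df c s ≤ d.Df c t * d.Df c t := by
    refine le_of_tendsto_of_tendsto ((hlim s).mul_const _) ((hlim t).mul_const _) ?_
    filter_upwards [Ioo_mem_nhdsLT hsc] with y hy
    exact d.interface_prod hN hs ht (hs.1.trans hy.1).le hy.2 hC.2
      (hmax y ⟨hy.1.le, hy.2.le.trans hct⟩)
  exact (mul_self_le_mul_self_iff (d.Df_pos hN hC hs).le (d.Df_pos hN hC ht).le).2 h

lemma interface_ge (hN : 3 ≤ N) (d : GreenData N) {s t c : ℝ} (hs : s ∈ Ioc (0:ℝ) 1)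
    (ht : t ∈ Ioc (0:ℝ) 1) (hsc : s ≤ c) (hct : c < t)
    (hmax : ∀ y ∈ Icc s t, d.Kf y t - d.Kf y s ≤ d.Kf c t - d.Kf c s) :
    d.Df c t ≤ d.Df c s := by
  have hC : c ∈ Icc (0:ℝ) 1 := ⟨(hs.1.trans_le hsc).le, hct.le.trans ht.2⟩
  have hlim : ∀ r, Tendsto (fun y => d.Df y r) (𝓝[>] c) (𝓝 (d.Df c r)) := fun r => by
    have h := ((d.Df_cont_c hN r c hC).mono (show Ioo c t ⊆ Icc 0 1 from fun x hx =>
      ⟨hC.1.trans hx.1.le, hx.2.le.trans ht.2⟩)).tendsto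
    rwa [nhdsWithin_Ioo_eq_nhdsGT hct] at h
  have h : d.Df c t * d.Df c t ≤ d.Df c s * d.Df c s := by
    refine le_of_tendsto_of_tendsto ((hlim t).const_mul _) ((hlim s).const_mul _) ?_
    filter_upwards [Ioo_mem_nhdsGT hct] with y hy
    exact d.interface_prod hN ht hs hC.1 hy.1 (hy.2.le.trans ht.2)
      (by linarith [hmax y ⟨hsc.trans hy.1.le, hy.2.le⟩])
  exact (mul_self_le_mul_self_iff (d.Df_pos hN hC ht).le (d.Df_pos hN hC hs).le).2 h

/-- Opening up a new interval `[0,b]` with peak at `b` strictly increases the energy. -/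
lemma open_gain (hN : 3 ≤ N) (d : GreenData N) {b t : ℝ} (hb : 0 < b) (hbt : b < t)
    (ht : t ≤ 1) : d.Kf 0 t < d.Kf 0 b - d.Kf b b + d.Kf b t := by
  have h0 : (0:ℝ) ∈ Icc (0:ℝ) 1 := ⟨le_rfl, zero_le_one⟩
  have hB : b ∈ Ioc (0:ℝ) 1 := ⟨hb, hbt.le.trans ht⟩
  have hT : t ∈ Ioc (0:ℝ) 1 := ⟨hb.trans hbt, ht⟩
  have h1 := d.Kf_sub hN h0 (Ioc_subset_Icc_self hB) hB
  have h2 := d.Kf_sub hN h0 (Ioc_subset_Icc_self hB) hT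
  have hD := d.Df_gt_right hN hb hbt ht
  have hlt : d.Df 0 b * d.Df b b < d.Df 0 t * d.Df b t := by
    rw [d.Df_self hB, mul_one, d.Df_zero hN, d.Df_zero hN]
    have hx := d.xi_mono (Ioc_subset_Icc_self hB) (Ioc_subset_Icc_self hT) hbt
    have hx0 := d.xi_pos t (Ioc_subset_Icc_self hT)
    have hN' : (0:ℝ) < (N:ℝ) - 2 := by
      have : (3:ℝ) ≤ N := by exact_mod_cast hN
      linarith
    have h3 : d.xi b * ((N:ℝ) - 2) < d.xi t * ((N:ℝ) - 2) := by gcongr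
    exact h3.trans (lt_mul_of_one_lt_right (by positivity) hD)
  have h3 := div_lt_div_of_pos_left (d.cross_pos hN le_rfl hb hB.2)
    (mul_pos (d.Df_pos hN h0 hB) (d.Df_pos hN (Ioc_subset_Icc_self hB) hB)) hlt
  linarith

lemma energy_pos (hN : 3 ≤ N) (d : GreenData N) {b s : ℝ} (hs : 0 < s) (hsb : s < b)
    (hb : b ≤ 1) : 0 < d.Kf 0 s - d.Kf b s := by
  have h0 : (0:ℝ) ∈ Icc (0:ℝ) 1 := ⟨le_rfl, zero_le_one⟩
  have hB : b ∈ Icc (0:ℝ) 1 := ⟨(hs.trans hsb).le, hb⟩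
  have hS : s ∈ Ioc (0:ℝ) 1 := ⟨hs, hsb.le.trans hb⟩
  rw [d.Kf_sub hN h0 hB hS]
  exact div_pos (d.cross_pos hN le_rfl (hs.trans hsb) hb)
    (mul_pos (d.Df_pos hN h0 hS) (d.Df_pos hN hB hS))

/-! ### The total energy and its maximizer -/

/-- The contribution of two consecutive nodes. Even-indexed nodes are interfaces `β`, odd-indexed
nodes are peaks `α`. -/
noncomputable def term (d : GreenData N) (i : ℕ) (a b : ℝ) : ℝ :=
  if Even i then d.Kf a b else -d.Kf b a

/-- The total energy `∑_j K(β_{j-1}, α_j) - K(β_j, α_j)` of the nodes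
`0 = β₀ ≤ α₁ ≤ β₁ ≤ ⋯ ≤ α_k ≤ β_k = 1`, listed as `x 0, x 1, …, x (2k)`. -/
noncomputable def energy (d : GreenData N) (k : ℕ) (x : ℕ → ℝ) : ℝ :=
  ∑ i ∈ Finset.range (2 * k), d.term i (x i) (x (i + 1))

/-- The closed simplex of nodes, as sequences which equal `1` from the index `2k` on. -/
def nodes (k : ℕ) : Set (ℕ → ℝ) :=
  {x | x 0 = 0 ∧ (∀ i, 2 * k ≤ i → x i = 1) ∧ ∀ i, x i ≤ x (i + 1)}

lemma nodes_mono {k : ℕ} {x : ℕ → ℝ} (hx : x ∈ nodes k) : Monotone x :=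
  monotone_nat_of_le_succ hx.2.2

lemma nodes_mem {k : ℕ} {x : ℕ → ℝ} (hx : x ∈ nodes k) (i : ℕ) : x i ∈ Icc (0:ℝ) 1 := by
  constructor
  · rw [← hx.1]; exact nodes_mono hx (Nat.zero_le i)
  · rw [← hx.2.1 (i + 2 * k) (by omega)]; exact nodes_mono hx (by omega)

lemma nodes_compact (k : ℕ) : IsCompact (nodes k) := by
  have hc : IsCompact (Set.pi univ fun _ : ℕ => Icc (0:ℝ) 1) :=
    isCompact_univ_pi fun _ => isCompact_Icc
  refine hc.of_isClosed_subset ?_ fun x hx i _ => nodes_mem hx i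
  have e : nodes k = {x | x 0 = 0} ∩ ((⋂ i, ⋂ _ : 2 * k ≤ i, {x : ℕ → ℝ | x i = 1}) ∩
      ⋂ i, {x : ℕ → ℝ | x i ≤ x (i + 1)}) := by
    ext x; simp [nodes]
  rw [e]
  refine (isClosed_eq (continuous_apply 0) continuous_const).inter (IsClosed.inter ?_ ?_)
  · exact isClosed_iInter fun i => isClosed_iInter fun _ =>
      isClosed_eq (continuous_apply i) continuous_const
  · exact isClosed_iInter fun i => isClosed_le (continuous_apply i) (continuous_apply (i + 1))

lemma energy_cont (hN : 3 ≤ N) (d : GreenData N) (k : ℕ) :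
    ContinuousOn (d.energy k) (nodes k) := by
  refine continuousOn_finsetSum _ fun i _ => ?_
  have h1 : ContinuousOn (fun x : ℕ → ℝ => d.Kf (x i) (x (i + 1))) (nodes k) :=
    (d.Kf_cont hN).comp (f := fun x : ℕ → ℝ => (x i, x (i + 1))) (by fun_prop)
      fun x hx => ⟨nodes_mem hx i, nodes_mem hx (i + 1)⟩
  have h2 : ContinuousOn (fun x : ℕ → ℝ => d.Kf (x (i + 1)) (x i)) (nodes k) :=
    (d.Kf_cont hN).comp (f := fun x : ℕ → ℝ => (x (i + 1), x i)) (by fun_prop)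
      fun x hx => ⟨nodes_mem hx (i + 1), nodes_mem hx i⟩
  by_cases h : Even i
  · simpa only [term, if_pos h] using h1
  · simp only [term, if_neg h]
    exact h2.neg

lemma exists_max (hN : 3 ≤ N) (d : GreenData N) {k : ℕ} (hk : 2 ≤ k) :
    ∃ x ∈ nodes k, ∀ y ∈ nodes k, d.energy k y ≤ d.energy k x := by
  have hne : (nodes k).Nonempty := by
    refine ⟨fun i => if i = 0 then 0 else 1, by simp, fun i hi => ?_, fun i => ?_⟩
    · have : i ≠ 0 := by omega
      simp [this]
    · by_cases h : i = 0 <;> simp [h]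
  exact (nodes_compact k).exists_isMaxOn hne (d.energy_cont hN k)

lemma update_mem {k : ℕ} {x : ℕ → ℝ} (hx : x ∈ nodes k) {i : ℕ} (hi : i + 1 < 2 * k) {y : ℝ}
    (h1 : x i ≤ y) (h2 : y ≤ x (i + 2)) : Function.update x (i + 1) y ∈ nodes k := by
  refine ⟨?_, fun j hj => ?_, fun j => ?_⟩
  · rw [Function.update_of_ne (by omega)]; exact hx.1
  · rw [Function.update_of_ne (by omega)]; exact hx.2.1 j hj
  · rcases eq_or_ne j i with rfl | hj
    · rwa [Function.update_self, Function.update_of_ne (by omega)]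
    rcases eq_or_ne j (i + 1) with rfl | hj'
    · rwa [Function.update_self, Function.update_of_ne (by omega)]
    · rw [Function.update_of_ne hj', Function.update_of_ne (by omega)]; exact hx.2.2 j

/-- Moving one node changes only the two terms that contain it. -/
lemma energy_update (d : GreenData N) {k : ℕ} (x : ℕ → ℝ) {i : ℕ} (hi : i + 1 < 2 * k) (y : ℝ) :
    d.energy k (Function.update x (i + 1) y) - d.energy k x =
      (d.term i (x i) y + d.term (i + 1) y (x (i + 2))) -
      (d.term i (x i) (x (i + 1)) + d.term (i + 1) (x (i + 1)) (x (i + 2))) := by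
  rw [energy, energy, ← Finset.sum_sub_distrib,
    Finset.sum_eq_add_of_mem i (i + 1) (Finset.mem_range.2 (by omega))
      (Finset.mem_range.2 hi) (by omega)]
  · rw [Function.update_self, Function.update_of_ne (by omega), Function.update_of_ne (by omega)]
    ring
  · intro j _ hj
    rw [Function.update_of_ne (by omega), Function.update_of_ne (by omega), sub_self]

lemma max_local (d : GreenData N) {k : ℕ} {x : ℕ → ℝ} (hx : x ∈ nodes k)
    (hmax : ∀ y ∈ nodes k, d.energy k y ≤ d.energy k x) {i : ℕ} (hi : i + 1 < 2 * k) {y : ℝ}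
    (hy : y ∈ Icc (x i) (x (i + 2))) :
    d.term i (x i) y + d.term (i + 1) y (x (i + 2)) ≤
      d.term i (x i) (x (i + 1)) + d.term (i + 1) (x (i + 1)) (x (i + 2)) := by
  have h1 := d.energy_update x hi y
  have h2 := hmax _ (update_mem hx hi hy.1 hy.2)
  linarith

/-- Optimality in a peak. -/
lemma max_peak (d : GreenData N) {k : ℕ} {x : ℕ → ℝ} (hx : x ∈ nodes k)
    (hmax : ∀ y ∈ nodes k, d.energy k y ≤ d.energy k x) {i : ℕ} (hi : i + 1 < 2 * k)
    (he : Even i) {y : ℝ} (hy : y ∈ Icc (x i) (x (i + 2))) :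
    d.Kf (x i) y - d.Kf (x (i + 2)) y ≤
      d.Kf (x i) (x (i + 1)) - d.Kf (x (i + 2)) (x (i + 1)) := by
  have h := d.max_local hx hmax hi hy
  have ho : ¬ Even (i + 1) := by simpa [Nat.even_add_one] using he
  simp only [term, if_pos he, if_neg ho] at h
  linarith

/-- Optimality in an interface. -/
lemma max_interface (d : GreenData N) {k : ℕ} {x : ℕ → ℝ} (hx : x ∈ nodes k)
    (hmax : ∀ y ∈ nodes k, d.energy k y ≤ d.energy k x) {i : ℕ} (hi : i + 1 < 2 * k)
    (ho : ¬ Even i) {y : ℝ} (hy : y ∈ Icc (x i) (x (i + 2))) :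
    d.Kf y (x (i + 2)) - d.Kf y (x i) ≤
      d.Kf (x (i + 1)) (x (i + 2)) - d.Kf (x (i + 1)) (x i) := by
  have h := d.max_local hx hmax hi hy
  have he : Even (i + 1) := by simpa [Nat.even_add_one] using ho
  simp only [term, if_pos he, if_neg ho] at h
  linarith

/-- No node of a maximizer except `x 0` sits at the singular point `0`. -/
lemma max_one_pos (hN : 3 ≤ N) (d : GreenData N) {k : ℕ} {x : ℕ → ℝ}
    (hx : x ∈ nodes k) (hmax : ∀ y ∈ nodes k, d.energy k y ≤ d.energy k x) : 0 < x 1 := by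
  by_contra hcon
  have hex : ∃ n, 0 < x n := ⟨2 * k, by rw [hx.2.1 _ le_rfl]; exact zero_lt_one⟩
  classical
  -- `n` is the first index of a positive node
  obtain ⟨n, hn, hmin⟩ : ∃ n, 0 < x n ∧ ∀ m < n, ¬ 0 < x m :=
    ⟨Nat.find hex, Nat.find_spec hex, fun m hm => Nat.find_min hex hm⟩
  have hzero : ∀ m < n, x m = 0 := fun m hm => le_antisymm (not_lt.1 (hmin m hm)) (nodes_mem hx m).1
  have hn2 : 2 ≤ n := by
    by_contra h
    have : n = 0 ∨ n = 1 := by omega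
    rcases this with rfl | rfl
    · rw [hx.1] at hn; exact lt_irrefl _ hn
    · exact hcon hn
  have hnk : n ≤ 2 * k := by
    by_contra h
    have := hzero (2 * k) (by omega)
    rw [hx.2.1 _ le_rfl] at this
    exact one_ne_zero this
  have hn1 := (nodes_mem hx n).2
  obtain ⟨i, rfl⟩ : ∃ i, n = i + 2 := ⟨n - 2, by omega⟩
  have e0 : x i = 0 := hzero i (by omega)
  have e1 : x (i + 1) = 0 := hzero (i + 1) (by omega)
  by_cases he : Even i
  · -- the last node at `0` is a peak, and its interval carries no energy
    have h := d.max_peak hx hmax (by omega) he (y := x (i + 2) / 2)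
      ⟨by rw [e0]; linarith, by linarith⟩
    rw [e0, e1, Kf_right_zero, Kf_right_zero, sub_zero] at h
    exact absurd h (not_le.2 (d.energy_pos hN (by linarith) (by linarith) hn1))
  · -- the last node at `0` is an interface: move it together with the preceding peak
    obtain ⟨l, rfl⟩ : ∃ l, i = l + 1 := by
      cases i with
      | zero => exact absurd (by decide) he
      | succ l => exact ⟨l, rfl⟩
    have hl : Even l := by simpa [Nat.even_add_one] using he
    have el : x l = 0 := hzero l (by omega)
    set b := x (l + 1 + 2) / 2 with hb
    have hb0 : 0 < b := by linarith
    have hbt : b < x (l + 1 + 2) := by linarith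
    have m1 : Function.update x (l + 1 + 1) b ∈ nodes k :=
      update_mem hx (by omega) (by rw [e0]; exact hb0.le) hbt.le
    have u1 := d.energy_update x (k := k) (i := l + 1) (by omega) b
    have m2 : Function.update (Function.update x (l + 1 + 1) b) (l + 1) b ∈ nodes k :=
      update_mem m1 (by omega)
        (by rw [Function.update_of_ne (by omega), el]; exact hb0.le)
        (by rw [Function.update_self])
    have u2 := d.energy_update (Function.update x (l + 1 + 1) b) (k := k) (i := l) (by omega) b
    have h := hmax _ m2
    have hE : Even (l + 1 + 1) := by simpa [Nat.even_add_one] using hl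
    rw [Function.update_of_ne (show l ≠ l + 1 + 1 by omega),
      Function.update_of_ne (show l + 1 ≠ l + 1 + 1 by omega),
      show l + 2 = l + 1 + 1 from rfl, Function.update_self] at u2
    simp only [term, if_pos hl, if_neg he, if_pos hE, el, e0, e1, Kf_right_zero] at u1 u2
    have hg := d.open_gain hN hb0 hbt hn1
    linarith

/-- The nodes of a maximizer are strictly increasing. -/
lemma max_strict (hN : 3 ≤ N) (d : GreenData N) {k : ℕ} {x : ℕ → ℝ}
    (hx : x ∈ nodes k) (hmax : ∀ y ∈ nodes k, d.energy k y ≤ d.energy k x) :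
    ∀ i < 2 * k, x i < x (i + 1) := by
  have h1 := d.max_one_pos hN hx hmax
  intro i
  induction i with
  | zero => intro _; rw [hx.1]; exact h1
  | succ i ih =>
    intro hi
    have hlt := ih (by omega)
    refine lt_of_le_of_ne (hx.2.2 (i + 1)) fun heq => ?_
    have heq' : x (i + 1) = x (i + 2) := heq
    have hb1 := (nodes_mem hx (i + 2)).2
    by_cases he : Even i
    · refine d.peak_ne_right hN (nodes_mem hx i).1 (heq' ▸ hlt) hb1 fun y hy => ?_
      have := d.max_peak hx hmax hi he hy
      rwa [heq'] at this
    · have hi0 : 1 ≤ i := by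
        by_contra h
        have : i = 0 := by omega
        exact he (this ▸ (by decide))
      have hs : x i ∈ Ioc (0:ℝ) 1 := ⟨h1.trans_le (nodes_mono hx hi0), (nodes_mem hx i).2⟩
      have ht : x (i + 2) ∈ Ioc (0:ℝ) 1 :=
        ⟨hs.1.trans_le (nodes_mono hx (by omega)), hb1⟩
      have h := d.interface_le hN hs ht hlt (hx.2.2 (i + 1)) fun y hy =>
        d.max_interface hx hmax hi he hy
      rw [heq', d.Df_self ht] at h
      exact absurd h (not_le.2 (d.Df_gt_left hN hs.1 (heq' ▸ hlt) hb1))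

/-! ### The functions `ξ_{[a,b]}`, `ζ_{[a,b]}` and the Green quotient -/

lemma two_lt_cast (hN : 3 ≤ N) : (0:ℝ) < (N:ℝ) - 2 := by
  have : (3:ℝ) ≤ N := by exact_mod_cast hN
  linarith

lemma deriv_xi_eq (d : GreenData N) {c : ℝ} (hc : 0 < c) :
    deriv d.xi c = d.Pf c / c ^ (N - 1) := by
  rw [Pf, mul_div_cancel_left₀ _ (pow_pos hc _).ne']

lemma deriv_zeta_eq (d : GreenData N) {c : ℝ} (hc : 0 < c) :
    deriv d.zeta c = -(d.Qf c / c ^ (N - 1)) := by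
  rw [Qf_of_ne d hc.ne', neg_div, neg_neg, mul_div_cancel_left₀ _ (pow_pos hc _).ne']

lemma neumann_eq (d : GreenData N) {c : ℝ} (hc : 0 < c) (r : ℝ) :
    deriv d.xi c * d.zeta r - d.xi r * deriv d.zeta c = (c ^ (N - 1))⁻¹ * d.Df c r := by
  rw [d.deriv_xi_eq hc, d.deriv_zeta_eq hc, Df]; ring

lemma sqrt_pos (hN : 3 ≤ N) (d : GreenData N) {a b : ℝ} (ha : 0 < a) (hab : a < b)
    (hb : b ≤ 1) :
    0 < Real.sqrt (deriv d.xi a * deriv d.zeta b - deriv d.xi b * deriv d.zeta a) := by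
  apply Real.sqrt_pos.2
  have hb0 := ha.trans hab
  have e : deriv d.xi a * deriv d.zeta b - deriv d.xi b * deriv d.zeta a
      = (d.Pf b * d.Qf a - d.Pf a * d.Qf b) * ((a ^ (N - 1))⁻¹ * (b ^ (N - 1))⁻¹) := by
    rw [d.deriv_xi_eq ha, d.deriv_zeta_eq ha, d.deriv_xi_eq hb0, d.deriv_zeta_eq hb0]; ring
  rw [e]
  exact mul_pos (d.cross_pos hN ha.le hab hb) (by positivity)

lemma xiI_eq (hN : 3 ≤ N) (d : GreenData N) {a b : ℝ} (ha : 0 ≤ a) (hab : a < b) (hb : b ≤ 1) :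
    ∃ κ : ℝ, κ ≠ 0 ∧ d.xiI a b = fun r => κ * d.Df a r := by
  have hN' := two_lt_cast hN
  rcases ha.eq_or_lt with rfl | ha0
  · by_cases h1 : b = 1
    · refine ⟨((N:ℝ) - 2)⁻¹, inv_ne_zero hN'.ne', funext fun r => ?_⟩
      rw [xiI, if_pos rfl, if_pos h1, d.Df_zero hN]; field_simp
    · have hd : deriv d.xi b ≠ 0 := by
        rw [d.deriv_xi_eq hab]
        exact (div_pos (d.Pf_pos hN ⟨hab, hb⟩) (pow_pos hab _)).ne'
      refine ⟨((N:ℝ) - 2)⁻¹ * (deriv d.xi b)⁻¹, mul_ne_zero (inv_ne_zero hN'.ne') (inv_ne_zero hd),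
        funext fun r => ?_⟩
      rw [xiI, if_pos rfl, if_neg h1, d.Df_zero hN]; field_simp
  · have hp : (a ^ (N - 1))⁻¹ ≠ 0 := inv_ne_zero (pow_pos ha0 _).ne'
    by_cases h1 : b = 1
    · refine ⟨(a ^ (N - 1))⁻¹, hp, funext fun r => ?_⟩
      rw [xiI, if_neg ha0.ne', if_pos h1, d.neumann_eq ha0]
    · refine ⟨(a ^ (N - 1))⁻¹ * (Real.sqrt _)⁻¹,
        mul_ne_zero hp (inv_ne_zero (d.sqrt_pos hN ha0 hab hb).ne'), funext fun r => ?_⟩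
      rw [xiI, if_neg ha0.ne', if_neg h1]
      simp only [d.neumann_eq ha0]
      ring

lemma zetaI_eq (hN : 3 ≤ N) (d : GreenData N) {a b : ℝ} (ha : 0 ≤ a) (hab : a < b)
    (hb : b ≤ 1) : ∃ κ : ℝ, κ ≠ 0 ∧ d.zetaI a b = fun r => κ * d.Df b r := by
  have hb0 := ha.trans_lt hab
  have hp : (b ^ (N - 1))⁻¹ ≠ 0 := inv_ne_zero (pow_pos hb0 _).ne'
  have hP1 := (d.Pf_pos hN (r := b) ⟨hb0, hb⟩).ne'
  rcases ha.eq_or_lt with h0 | ha0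
  · by_cases h1 : b = 1
    · refine ⟨(d.Pf b)⁻¹, inv_ne_zero hP1, funext fun r => ?_⟩
      rw [zetaI, if_pos h0.symm, if_pos h1, Df]
      subst h1
      rw [d.Qf_one]; field_simp; ring
    · refine ⟨(b ^ (N - 1))⁻¹, hp, funext fun r => ?_⟩
      rw [zetaI, if_pos h0.symm, if_neg h1, d.neumann_eq hb0]
  · by_cases h1 : b = 1
    · have hd : deriv d.zeta a ≠ 0 := by
        rw [d.deriv_zeta_eq ha0]
        exact neg_ne_zero.2
          (div_pos (d.Qf_pos hN ⟨ha0.le, hab.trans_le hb⟩) (pow_pos ha0 _)).ne'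
      refine ⟨-((d.Pf b)⁻¹ * (deriv d.zeta a)⁻¹),
        neg_ne_zero.2 (mul_ne_zero (inv_ne_zero hP1) (inv_ne_zero hd)), funext fun r => ?_⟩
      rw [zetaI, if_neg ha0.ne', if_pos h1, Df]
      subst h1
      rw [d.Qf_one]; field_simp; ring
    · refine ⟨(b ^ (N - 1))⁻¹ * (Real.sqrt _)⁻¹,
        mul_ne_zero hp (inv_ne_zero (d.sqrt_pos hN ha0 hab hb).ne'), funext fun r => ?_⟩
      rw [zetaI, if_neg ha0.ne', if_neg h1]
      simp only [d.neumann_eq hb0]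
      ring

lemma reflection_of_max (hN : 3 ≤ N) (d : GreenData N) {a b s : ℝ} (ha : 0 ≤ a)
    (hb : b ≤ 1) (hs : s ∈ Ioo a b)
    (hmax : ∀ y ∈ Icc a b, d.Kf a y - d.Kf b y ≤ d.Kf a s - d.Kf b s) :
    d.ReflectionAt a b s := by
  have hab := hs.1.trans hs.2
  have hS : s ∈ Ioo (0:ℝ) 1 := ⟨ha.trans_lt hs.1, hs.2.trans_le hb⟩
  have h := d.peak_deriv hN ha hb hs hmax
  obtain ⟨κ, hκ, e1⟩ := d.xiI_eq hN ha hab hb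
  obtain ⟨μ, hμ, e2⟩ := d.zetaI_eq hN ha hab hb
  have hA := (d.Df_pos hN (c := a) (r := s) ⟨ha, hab.le.trans hb⟩ (Ioo_subset_Ioc_self hS)).ne'
  have hB := (d.Df_pos hN (c := b) (r := s) ⟨ha.trans hab.le, hb⟩ (Ioo_subset_Ioc_self hS)).ne'
  have hdA : deriv (d.xiI a b) s = κ * deriv (d.Df a) s := by
    rw [e1, deriv_const_mul _ (d.Df_hasDerivAt a hS).differentiableAt]
  have hdB : deriv (d.zetaI a b) s = μ * deriv (d.Df b) s := by
    rw [e2, deriv_const_mul _ (d.Df_hasDerivAt b hS).differentiableAt]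
  rw [ReflectionAt, hdA, hdB, e1, e2, mul_div_mul_left _ _ hκ, mul_div_mul_left _ _ hμ,
    div_add_div _ _ hA hB, h, zero_div]

/-- The Green quotient `G(r,s)/G(s,s)` in terms of the solutions `D_a` and `D_b`. -/
lemma G_quot (hN : 3 ≤ N) (d : GreenData N) {a b s : ℝ} (ha : 0 ≤ a) (hb : b ≤ 1)
    (hs : s ∈ Ioo a b) (r : ℝ) :
    d.G a b r s / d.G a b s s =
      if r ≤ s then d.Df a r / d.Df a s else d.Df b r / d.Df b s := by
  have hab := hs.1.trans hs.2
  have hS : s ∈ Ioc (0:ℝ) 1 := ⟨ha.trans_lt hs.1, hs.2.le.trans hb⟩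
  obtain ⟨κ, hκ, e1⟩ := d.xiI_eq hN ha hab hb
  obtain ⟨μ, hμ, e2⟩ := d.zetaI_eq hN ha hab hb
  have hA := (d.Df_pos hN (c := a) (r := s) ⟨ha, hab.le.trans hb⟩ hS).ne'
  have hB := (d.Df_pos hN (c := b) (r := s) ⟨ha.trans hab.le, hb⟩ hS).ne'
  have hp : s ^ (N - 1) ≠ 0 := (pow_pos hS.1 _).ne'
  simp only [G, e1, e2, le_refl, if_true]
  split_ifs
  · field_simp
  · field_simp

/-! ### Gluing -/

lemma glue {f g : ℝ → ℝ} {a b c : ℝ} (hab : a ≤ b) (hbc : b ≤ c)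
    (hf : ContinuousOn f (Icc a b)) (hg : ContinuousOn g (Icc b c)) (h : f b = g b) :
    ContinuousOn (fun r => if r ≤ b then f r else g r) (Icc a c) := by
  rw [← Icc_union_Icc_eq_Icc hab hbc]
  refine ContinuousOn.union_of_isClosed ?_ ?_ isClosed_Icc isClosed_Icc
  · exact hf.congr fun r hr => if_pos hr.2
  · refine hg.congr fun r hr => ?_
    rcases hr.1.eq_or_lt with rfl | h'
    · simp [h]
    · simp [not_le.2 h']

lemma piece_cont (hN : 3 ≤ N) (d : GreenData N) {a b s : ℝ} (ha : 0 ≤ a) (hb : b ≤ 1)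
    (hs : s ∈ Ioo a b) :
    ContinuousOn (fun r => if r ≤ s then d.Df a r / d.Df a s else d.Df b r / d.Df b s)
      (Icc a b) := by
  have hS : s ∈ Ioc (0:ℝ) 1 := ⟨ha.trans_lt hs.1, hs.2.le.trans hb⟩
  have hab := hs.1.trans hs.2
  have hA := (d.Df_pos hN (c := a) (r := s) ⟨ha, hab.le.trans hb⟩ hS).ne'
  have hB := (d.Df_pos hN (c := b) (r := s) ⟨ha.trans hab.le, hb⟩ hS).ne'
  refine glue hs.1.le hs.2.le ?_ ?_ (by rw [div_self hA, div_self hB])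
  · refine ContinuousOn.div_const ?_ _
    rcases ha.eq_or_lt with rfl | ha0
    · exact (d.Df_cont_left hN).mono fun r hr => ⟨hr.1, hr.2.trans hS.2⟩
    · exact (d.Df_cont a).mono fun r hr => ⟨ha0.trans_le hr.1, hr.2.trans hS.2⟩
  · exact ((d.Df_cont b).mono fun r hr => ⟨hS.1.trans_le hr.1, hr.2.trans hb⟩).div_const _

/-- Given strictly increasing nodes satisfying the matching condition at every interface, the
Green quotients of the first `m` intervals glue to a continuous function. -/
lemma glue_all (hN : 3 ≤ N) (d : GreenData N) {k : ℕ} {β α : ℕ → ℝ} (h0 : β 0 = 0)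
    (hmem : ∀ j, β j ∈ Icc (0:ℝ) 1)
    (hα : ∀ j < k, α (j + 1) ∈ Ioo (β j) (β (j + 1)))
    (hmatch : ∀ j, 1 ≤ j → j < k → d.Df (β j) (α (j + 1)) = d.Df (β j) (α j)) (m : ℕ)
    (hm : 1 ≤ m) (hmk : m ≤ k) :
    ∃ u : ℝ → ℝ, ContinuousOn u (Icc 0 (β m)) ∧ u (β m) = 1 / d.Df (β m) (α m) ∧
      ∀ j, 1 ≤ j → j ≤ m → ∀ r ∈ Ico (β (j - 1)) (β j),
        u r = d.G (β (j - 1)) (β j) r (α j) / d.G (β (j - 1)) (β j) (α j) (α j) := by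
  have hlt : ∀ j < k, β j < β (j + 1) := fun j hj => (hα j hj).1.trans (hα j hj).2
  have hpos : ∀ j, 1 ≤ j → j ≤ k → 0 < β j := fun j h1 h2 => by
    obtain ⟨i, rfl⟩ : ∃ i, j = i + 1 := ⟨j - 1, by omega⟩
    exact (hmem i).1.trans_lt (hlt i (by omega))
  have hle : ∀ j i, j ≤ i → i ≤ k → β j ≤ β i := by
    intro j i hji
    induction i, hji using Nat.le_induction with
    | base => intro _; exact le_rfl
    | succ n _ ih => intro hn; exact (ih (by omega)).trans (hlt n (by omega)).le
  induction m, hm using Nat.le_induction with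
  | base =>
    have ha := hα 0 (by omega)
    have hb := (hmem 1).2
    refine ⟨_, (by simpa [h0] using d.piece_cont hN (hmem 0).1 hb ha), ?_, ?_⟩
    · simp only [zero_add] at ha ⊢
      rw [if_neg (not_le.2 ha.2), d.Df_self ⟨hpos 1 le_rfl hmk, hb⟩]
    · intro j hj1 hj2 r _
      obtain rfl : j = 1 := le_antisymm hj2 hj1
      have := d.G_quot hN (hmem 0).1 hb ha r
      simpa [h0] using this.symm
  | succ m hm ih =>
    obtain ⟨u, hu, hue, huj⟩ := ih (by omega)
    have ha := hα m (by omega)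
    have hb := (hmem (m + 1)).2
    have hbm := hpos m hm (by omega)
    have hself := d.Df_self ⟨hbm, (hmem m).2⟩
    refine ⟨fun r => if r ≤ β m then u r else _,
      glue (hmem m).1 (hlt m (by omega)).le hu (d.piece_cont hN (hmem m).1 hb ha) ?_, ?_, ?_⟩
    · rw [hue, if_pos ha.1.le, hself, hmatch m hm (by omega)]
    · simp only
      rw [if_neg (not_le.2 (hlt m (by omega))), if_neg (not_le.2 ha.2),
        d.Df_self ⟨hpos (m + 1) (by omega) hmk, hb⟩]
    · intro j hj1 hj2 r hr
      simp only
      rcases Nat.lt_or_ge m j with h | h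
      · obtain rfl : j = m + 1 := by omega
        rw [Nat.add_sub_cancel] at hr ⊢
        rw [d.G_quot hN (hmem m).1 hb ha r]
        rcases hr.1.eq_or_lt with h' | h'
        · subst h'
          rw [if_pos le_rfl, if_pos ha.1.le, hue, hself, hmatch m hm (by omega)]
        · rw [if_neg (not_le.2 h')]
      · rw [if_pos (hr.2.le.trans (hle j m h (by omega)))]
        exact huj j hj1 h r hr

end GreenData

theorem statement12 {N : ℕ} (hN : 3 ≤ N) (d : GreenData N)
    (sbar : ℝ → ℝ → ℝ) (hsbar : IsSBar d sbar) (k : ℕ) (hk : 2 ≤ k) :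
    ∃ β : ℕ → ℝ, β 0 = 0 ∧ β k = 1 ∧ (∀ j < k, β j < β (j + 1)) ∧
      (∀ j, 1 ≤ j → j ≤ k - 1 → Minf d sbar β j = 0) ∧
      (∀ j, 1 ≤ j → j ≤ k - 1 →
        deriv d.xi (β j) / deriv d.zeta (β j) =
          (d.xi (sbar (β j) (β (j + 1))) - d.xi (sbar (β (j - 1)) (β j))) /
          (d.zeta (sbar (β j) (β (j + 1))) - d.zeta (sbar (β (j - 1)) (β j)))) ∧
      (∃ u : ℝ → ℝ, ContinuousOn u (Set.Icc 0 1) ∧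
        ∀ j, 1 ≤ j → j ≤ k → ∀ r ∈ Set.Ico (β (j - 1)) (β j),
          u r = d.G (β (j - 1)) (β j) r (sbar (β (j - 1)) (β j)) /
            d.G (β (j - 1)) (β j) (sbar (β (j - 1)) (β j)) (sbar (β (j - 1)) (β j))) := by
  obtain ⟨x, hx, hmax⟩ := d.exists_max hN hk
  have hst := d.max_strict hN hx hmax
  have hmem := GreenData.nodes_mem hx
  -- the odd nodes are the points `s̄` of the adjacent even ones
  have hsb : ∀ j < k, sbar (x (2 * j)) (x (2 * (j + 1))) = x (2 * j + 1) := by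
    intro j hj
    have hs : x (2 * j + 1) ∈ Ioo (x (2 * j)) (x (2 * (j + 1))) :=
      ⟨hst (2 * j) (by omega), hst (2 * j + 1) (by omega)⟩
    have hb := (hmem (2 * (j + 1))).2
    refine ((hsbar _ _ (hmem (2 * j)).1 (hs.1.trans hs.2) hb).2.2 _ hs ?_).symm
    exact d.reflection_of_max hN (hmem (2 * j)).1 hb hs fun y hy =>
      d.max_peak hx hmax (i := 2 * j) (by omega) (even_two_mul j) hy
  have hlt : ∀ j < k, x (2 * j) < x (2 * (j + 1)) := fun j hj =>
    (hst (2 * j) (by omega)).trans (hst (2 * j + 1) (by omega))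
  have h1 : 0 < x 1 := by
    have := hst 0 (by omega)
    rwa [hx.1] at this
  have hpos : ∀ i, 1 ≤ i → x i ∈ Ioc (0:ℝ) 1 := fun i hi =>
    ⟨h1.trans_le (GreenData.nodes_mono hx hi), (hmem i).2⟩
  have hmatch : ∀ i, i + 1 < k →
      d.Df (x (2 * (i + 1))) (x (2 * (i + 1) + 1)) = d.Df (x (2 * (i + 1))) (x (2 * i + 1)) := by
    intro i hi
    have ho : ¬ Even (2 * i + 1) := by simp
    have hm := fun (y : ℝ) (hy : y ∈ Icc (x (2 * i + 1)) (x (2 * i + 1 + 2))) =>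
      d.max_interface hx hmax (i := 2 * i + 1) (by omega) ho hy
    have hs := hpos (2 * i + 1) (by omega)
    have ht := hpos (2 * i + 1 + 2) (by omega)
    have l1 := hst (2 * i + 1) (by omega)
    have l2 := hst (2 * i + 2) (by omega)
    exact le_antisymm (d.interface_ge hN hs ht l1.le l2 hm) (d.interface_le hN hs ht l1 l2.le hm)
  have hone : x (2 * k) = 1 := hx.2.1 _ le_rfl
  refine ⟨fun j => x (2 * j), hx.1, hone, hlt, ?_, ?_, ?_⟩
  · intro j hj1 hj2
    obtain ⟨i, rfl⟩ : ∃ i, j = i + 1 := ⟨j - 1, by omega⟩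
    simp only [Minf, Nat.add_sub_cancel]
    rw [hsb (i + 1) (by omega), hsb i (by omega),
      d.neumann_eq (hpos (2 * (i + 1)) (by omega)).1,
      d.neumann_eq (hpos (2 * (i + 1)) (by omega)).1, hmatch i (by omega), sub_self, mul_zero]
  · intro j hj1 hj2
    obtain ⟨i, rfl⟩ : ∃ i, j = i + 1 := ⟨j - 1, by omega⟩
    simp only [Nat.add_sub_cancel]
    rw [hsb (i + 1) (by omega), hsb i (by omega)]
    have hm := hmatch i (by omega)
    have hc := hpos (2 * (i + 1)) (by omega)
    have hc1 : x (2 * (i + 1)) < 1 := by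
      rw [← hone]
      exact (hlt (i + 1) (by omega)).trans_le (GreenData.nodes_mono hx (by omega))
    have hQ := (d.Qf_pos hN ⟨hc.1.le, hc1⟩).ne'
    have hp := (pow_pos hc.1 (N - 1)).ne'
    have hz : d.zeta (x (2 * (i + 1) + 1)) - d.zeta (x (2 * i + 1)) ≠ 0 :=
      (sub_neg.2 (d.zeta_anti (hpos _ (by omega)) (hpos _ (by omega))
        ((hst (2 * i + 1) (by omega)).trans (hst (2 * i + 2) (by omega))))).ne
    rw [d.deriv_xi_eq hc.1, d.deriv_zeta_eq hc.1, ← neg_div, div_div_div_cancel_right₀ hp,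
      div_eq_div_iff (neg_ne_zero.2 hQ) hz]
    simp only [GreenData.Df] at hm
    linear_combination hm
  · obtain ⟨u, hu, -, huj⟩ := d.glue_all hN (k := k) (β := fun j => x (2 * j))
      (α := fun j => x (2 * j - 1)) hx.1 (fun j => hmem _)
      (fun j hj => ⟨hst (2 * j) (by omega), hst (2 * j + 1) (by omega)⟩)
      (fun j hj1 hj2 => by
        obtain ⟨i, rfl⟩ : ∃ i, j = i + 1 := ⟨j - 1, by omega⟩
        exact hmatch i hj2) k (by omega) le_rfl
    refine ⟨u, by simpa only [hone] using hu, fun j hj1 hj2 r hr => ?_⟩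
    have h := huj j hj1 hj2 r hr
    obtain ⟨i, rfl⟩ : ∃ i, j = i + 1 := ⟨j - 1, by omega⟩
    simp only [Nat.add_sub_cancel] at h ⊢
    rw [hsb i (by omega)]
    exact h
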